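/- arXiv:2206.03313 — 4 statements merged into one kernel-verified Lean document; each statement's English description precedes it below -/
import Mathlib

section
/- In an honest execution of the BBCS 1-out-of-2 oblivious transfer protocol, the receiver obtains the chosen message with probability 1. Precisely: for every n, every choice of sender bits x^S ∈ {0,1}^n and bases θ^S ∈ {0,1}^n, every receiver bases θ^R ∈ {0,1}^n, if for each index i the receiver's measurement outcome x^R_i is distributed by the Born rule from measuring the qubit |x^S_i⟩ encoded in basis θ^S_i using basis θ^R_i, then almost surely x^R_i = x^S_i for all i in I_0 := {i : θ^R_i = θ^S_i}; consequently, for every bit b, every pair of messages m_0, m_1 ∈ {0,1}^l and every pair of functions f_0, f_1 : {0,1}^{|I_0|} → {0,1}^l, setting s_j = m_j XOR f_j(x^S restricted to I_{b XOR j}) (where I_1 is the complement of I_0), the receiver's output s_b XOR f_b(x^R restricted to I_0) equals m_b with probability 1. -/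
/-!
When the two bases agree at index `i`, the outcome `!xS i` corresponds to a basis vector orthogonal
to the prepared state (`bornProb_ket_not`), so it has probability zero. Since the weights `μ g` are
nonnegative, every string `g` with `g i ≠ xS i` for some such `i` has weight zero
(`weight_eq_zero`). Any event containing all strings that agree with `xS` on the matching indices
therefore carries the whole mass. The receiver's output equals the chosen message on each of these
strings, because the hash is then evaluated on the same restricted key by both parties and the two
masks cancel.
-/

open scoped BigOperators

/-- The bit `x` encoded in the basis `θ` of `ℂ²` (`θ = false`: computational basis,
`θ = true`: Hadamard basis).  For a fixed `θ`, the two vectors `ket θ false` and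
`ket θ true` form the orthonormal basis labelled by `θ`, and `ket θ x` is the state
`|x⟩_θ`. -/
noncomputable def ket (θ x : Bool) : Fin 2 → ℂ := fun i =>
  if θ then (if i = 1 ∧ x = true then -1 else 1) / ((Real.sqrt 2 : ℝ) : ℂ)
  else if x then (if i = 1 then 1 else 0) else (if i = 0 then 1 else 0)

/-- Born rule: the probability of obtaining the outcome labelled by the basis vector `v`
when measuring the unit vector `ψ ∈ ℂ²`, namely `|⟨v, ψ⟩|²`. -/
noncomputable def bornProb (v ψ : Fin 2 → ℂ) : ℝ :=
  ‖∑ i, (starRingEnd ℂ) (v i) * ψ i‖ ^ 2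

/-- The two vectors of a basis are orthogonal, so the wrong bit is never observed when
measuring in the preparation basis. -/
theorem bornProb_ket_not (θ x : Bool) : bornProb (ket θ (!x)) (ket θ x) = 0 := by
  cases θ <;> cases x <;> simp [bornProb, ket, Fin.sum_univ_two] <;> ring

theorem weight_eq_zero {n : ℕ} {xS θS θR : Fin n → Bool} {μ : (Fin n → Bool) → ℝ}
    (hμ0 : ∀ g, 0 ≤ μ g)
    (hBorn : ∀ (i : Fin n) (y : Bool),
      (∑ g ∈ Finset.univ.filter (fun g : Fin n → Bool => g i = y), μ g)
        = bornProb (ket (θR i) y) (ket (θS i) (xS i)))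
    {g : Fin n → Bool} {i : Fin n} (hi : θR i = θS i) (hg : g i ≠ xS i) : μ g = 0 := by
  have h := hBorn i (!xS i)
  rw [hi, bornProb_ket_not, Finset.sum_eq_zero_iff_of_nonneg fun g _ => hμ0 g] at h
  exact h g (by simpa [Bool.eq_not] using hg)

/-- Honest-execution correctness of the BBCS 1-out-of-2 OT protocol.
`μ` is the distribution of the receiver's measurement outcome string `g = x^R`;
the hypothesis `hBorn` says each coordinate is Born-rule distributed for measuring
`|x^S_i⟩_{θ^S_i}` in the basis `θ^R_i`.  Conclusion: almost surely `x^R` agrees with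
`x^S` on `I₀ = {i : θ^R_i = θ^S_i}`, and consequently, for any choice bit `b`,
messages `m_0, m_1 ∈ {0,1}^l` and hash functions `F j` acting on the restriction of
the key to `I_{b ⊕ j}`, the receiver's output `s_b ⊕ F b (x^R|_{I₀})` (where
`s_j = m_j ⊕ F j (x^S|_{I_{b⊕j}})`) equals `m_b` with probability `1`. -/
theorem bbcs_honest_receiver_correct
    (n l : ℕ) (xS θS θR : Fin n → Bool)
    (μ : (Fin n → Bool) → ℝ)
    (hμ0 : ∀ g, 0 ≤ μ g)
    (hμ1 : ∑ g, μ g = 1)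
    (hBorn : ∀ (i : Fin n) (y : Bool),
      (∑ g ∈ Finset.univ.filter (fun g : Fin n → Bool => g i = y), μ g)
        = bornProb (ket (θR i) y) (ket (θS i) (xS i))) :
    ((∑ g ∈ Finset.univ.filter
        (fun g : Fin n → Bool => ∀ i, θR i = θS i → g i = xS i), μ g) = 1)
    ∧
    ∀ (b : Bool) (m : Bool → Fin l → Bool)
      (F : (j : Bool) → ({i : Fin n // (θR i != θS i) = xor b j} → Bool) → Fin l → Bool),
      (∑ g ∈ Finset.univ.filter (fun g : Fin n → Bool =>
          ∀ t : Fin l,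
            xor (xor (m b t) (F b (fun i => xS i.1) t))
                (F b (fun i => g i.1) t) = m b t), μ g) = 1 := by
  have key : ∀ (P : (Fin n → Bool) → Prop) [DecidablePred P],
      (∀ g, (∀ i, θR i = θS i → g i = xS i) → P g) →
      ∑ g ∈ Finset.univ.filter P, μ g = 1 := by
    intro P _ hP
    rw [← hμ1]
    refine Finset.sum_filter_of_ne fun g _ hg => hP g fun i hi => ?_
    by_contra hne
    exact hg (weight_eq_zero hμ0 hBorn hi hne)
  refine ⟨key _ fun g hg => hg, fun b m F => key _ fun g hg t => ?_⟩
  -- The index type of `F b` is cut out by `xor b b = false`, i.e. by agreement of the bases.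
  have hres : (fun i : {i : Fin n // (θR i != θS i) = xor b b} => g i.1) = fun i => xS i.1 :=
    funext fun i => hg i.1 (by simpa using i.2)
  rw [hres, Bool.xor_assoc, Bool.xor_self, Bool.xor_false]
end

section
/- A cheating receiver in the Chailloux–Kerenidis–Sikora weak OT protocol learns both of the sender's message bits with probability at most 3/4: for every ancilla dimension d ≥ 1, every positive semidefinite matrix ρ on ℂ³ ⊗ ℂ^d with trace 1, and every four positive semidefinite matrices M_{00}, M_{01}, M_{10}, M_{11} on ℂ³ ⊗ ℂ^d summing to the identity, one has (1/4) · Σ_{(m_0,m_1) ∈ {0,1}²} tr( M_{m_0 m_1} · (U_{m_0,m_1} ⊗ I_d) ρ (U_{m_0,m_1} ⊗ I_d)† ) ≤ 3/4, where U_{m_0,m_1} is the diagonal unitary on ℂ³ with diagonal ((−1)^{m_0}, (−1)^{m_1}, 1). -/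
/-!
Write `ρ` as a `3 × 3` block matrix over `ℂ³` and let `D` be its block-diagonal part. For signs
`ε₀, ε₁, ε₂` the pinching inequality `E ρ E† ≤ 3 D` holds, with `E = diag(ε) ⊗ I`, because the
difference is `∑_{j<k} (εⱼ Pⱼ - εₖ Pₖ) ρ (εⱼ Pⱼ - εₖ Pₖ)†`, where `Pₖ` projects onto the `k`-th
block. Since `D` does not depend on the signs, every state `V_m ρ V_m†` is dominated by the same
`3 D`, so the sum of the four traces is at most `3 tr ((∑ M_m) D) = 3 tr D = 3 tr ρ = 3`. -/

open scoped BigOperators ComplexOrder Kronecker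
open Matrix

/-- Diagonal phases of the sender's unitary `U_{m₀,m₁}` on `ℂ³`:
diagonal `((−1)^{m₀}, (−1)^{m₁}, 1)`. -/
def phase (m : Bool × Bool) : Fin 3 → ℂ := fun k =>
  if k = 0 then (if m.1 then -1 else 1) else if k = 1 then (if m.2 then -1 else 1) else 1

/-- `U_{m₀,m₁} ⊗ I_d` as a matrix on `ℂ³ ⊗ ℂ^d`. -/
noncomputable def V (d : ℕ) (m : Bool × Bool) :
    Matrix (Fin 3 × Fin d) (Fin 3 × Fin d) ℂ :=
  (Matrix.diagonal (phase m)) ⊗ₖ (1 : Matrix (Fin d) (Fin d) ℂ)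

/-- The matrix `diag(c) ⊗ I_d`, written as a diagonal matrix. -/
def qutritDiag (d : ℕ) (c : Fin 3 → ℂ) : Matrix (Fin 3 × Fin d) (Fin 3 × Fin d) ℂ :=
  Matrix.diagonal fun i => c i.1

/-- The block-diagonal part `∑ₖ Pₖ ρ Pₖ` of `ρ`, i.e. `ρ` after dephasing the qutrit. -/
def pinch (d : ℕ) (ρ : Matrix (Fin 3 × Fin d) (Fin 3 × Fin d) ℂ) :
    Matrix (Fin 3 × Fin d) (Fin 3 × Fin d) ℂ :=
  Matrix.of fun i j => if i.1 = j.1 then ρ i j else 0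

lemma V_eq_qutritDiag (d : ℕ) (m : Bool × Bool) : V d m = qutritDiag d (phase m) := by
  rw [V, qutritDiag, ← Matrix.diagonal_one, Matrix.diagonal_kronecker_diagonal]
  simp

lemma qutritDiag_conj_apply (d : ℕ) (c : Fin 3 → ℂ)
    (ρ : Matrix (Fin 3 × Fin d) (Fin 3 × Fin d) ℂ) (i j : Fin 3 × Fin d) :
    (qutritDiag d c * ρ * (qutritDiag d c)ᴴ) i j = c i.1 * ρ i j * star (c j.1) := by
  simp [qutritDiag, Matrix.diagonal_conjTranspose]

lemma trace_pinch (d : ℕ) (ρ : Matrix (Fin 3 × Fin d) (Fin 3 × Fin d) ℂ) :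
    (pinch d ρ).trace = ρ.trace := by
  simp [Matrix.trace, pinch]

lemma phase_eq (m : Bool × Bool) :
    phase m = ![if m.1 then -1 else 1, if m.2 then -1 else 1, 1] := by
  ext k
  fin_cases k <;> rfl

/-- The pinching inequality as an identity: `3 D - V ρ V†` is a sum of three conjugates of `ρ`,
one for each pair of blocks. -/
lemma pinch_sub_eq (d : ℕ) (ρ : Matrix (Fin 3 × Fin d) (Fin 3 × Fin d) ℂ) (m : Bool × Bool) :
    (3 : ℂ) • pinch d ρ - V d m * ρ * (V d m)ᴴ =
      qutritDiag d ![phase m 0, -phase m 1, 0] * ρ * (qutritDiag d ![phase m 0, -phase m 1, 0])ᴴ +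
      qutritDiag d ![phase m 0, 0, -phase m 2] * ρ * (qutritDiag d ![phase m 0, 0, -phase m 2])ᴴ +
      qutritDiag d ![0, phase m 1, -phase m 2] * ρ *
        (qutritDiag d ![0, phase m 1, -phase m 2])ᴴ := by
  rw [V_eq_qutritDiag, phase_eq]
  obtain ⟨a, b⟩ := m
  ext ⟨i, x⟩ ⟨j, y⟩
  fin_cases i <;> fin_cases j <;> cases a <;> cases b <;>
    simp [qutritDiag_conj_apply, pinch] <;> ring

lemma posSemidef_pinch_sub (d : ℕ) {ρ : Matrix (Fin 3 × Fin d) (Fin 3 × Fin d) ℂ}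
    (hρ : ρ.PosSemidef) (m : Bool × Bool) :
    ((3 : ℂ) • pinch d ρ - V d m * ρ * (V d m)ᴴ).PosSemidef := by
  rw [pinch_sub_eq]
  exact ((hρ.mul_mul_conjTranspose_same _).add (hρ.mul_mul_conjTranspose_same _)).add
    (hρ.mul_mul_conjTranspose_same _)

-- The scoped order and norm make `Matrix n n ℂ` a C⋆-algebra, which provides `A = C† C`.
open scoped MatrixOrder Matrix.Norms.L2Operator in
lemma trace_mul_re_nonneg {n : Type*} [Fintype n] [DecidableEq n] {A B : Matrix n n ℂ}
    (hA : A.PosSemidef) (hB : B.PosSemidef) : 0 ≤ (A * B).trace.re := by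
  obtain ⟨C, rfl⟩ := CStarAlgebra.nonneg_iff_eq_star_mul_self.mp hA.nonneg
  rw [Matrix.mul_assoc, Matrix.trace_mul_comm]
  exact (Complex.le_def.mp (hB.mul_mul_conjTranspose_same C).trace_nonneg).1

/-- A cheating receiver in the Chailloux–Kerenidis–Sikora weak OT protocol learns both
of the sender's message bits with probability at most `3/4`: for every ancilla
dimension `d ≥ 1`, every state `ρ` on `ℂ³ ⊗ ℂ^d` (positive semidefinite, trace 1) and
every four-outcome POVM `{M_{m₀m₁}}`, the average success probability
`(1/4) Σ_{m₀,m₁} tr(M_{m₀m₁} (U_{m₀,m₁} ⊗ I_d) ρ (U_{m₀,m₁} ⊗ I_d)†)` is at most `3/4`. -/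
theorem cks_receiver_cheating_bound (d : ℕ) (hd : 1 ≤ d)
    (ρ : Matrix (Fin 3 × Fin d) (Fin 3 × Fin d) ℂ)
    (hρ : ρ.PosSemidef) (hρtr : ρ.trace = 1)
    (M : Bool × Bool → Matrix (Fin 3 × Fin d) (Fin 3 × Fin d) ℂ)
    (hM : ∀ m, (M m).PosSemidef) (hMsum : ∑ m, M m = 1) :
    (1 / 4 : ℝ) * (∑ m : Bool × Bool,
        (M m * (V d m * ρ * (V d m)ᴴ)).trace).re ≤ 3 / 4 := by
  have key : ∀ m, (M m * (V d m * ρ * (V d m)ᴴ)).trace.re ≤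
      (M m * ((3 : ℂ) • pinch d ρ)).trace.re := fun m => by
    have h := trace_mul_re_nonneg (hM m) (posSemidef_pinch_sub d hρ m)
    rw [Matrix.mul_sub, Matrix.trace_sub, Complex.sub_re] at h
    linarith
  have hsum : ∑ m, (M m * ((3 : ℂ) • pinch d ρ)).trace.re = 3 := by
    rw [← Complex.re_sum, ← Matrix.trace_sum, ← Finset.sum_mul, hMsum, Matrix.one_mul,
      Matrix.trace_smul, trace_pinch, hρtr]
    simp
  have h := Finset.sum_le_sum fun m (_ : m ∈ Finset.univ) => key m
  rw [hsum] at h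
  rw [Complex.re_sum]
  linarith
end

section
/- The 3/4 cheating bound for the receiver in the Chailloux–Kerenidis–Sikora weak OT protocol is tight: there exist a dimension d ≥ 1, a positive semidefinite trace-1 matrix ρ on ℂ³ ⊗ ℂ^d, and positive semidefinite matrices M_{00}, M_{01}, M_{10}, M_{11} on ℂ³ ⊗ ℂ^d summing to the identity, such that (1/4) · Σ_{(m_0,m_1) ∈ {0,1}²} tr( M_{m_0 m_1} · (U_{m_0,m_1} ⊗ I_d) ρ (U_{m_0,m_1} ⊗ I_d)† ) = 3/4, where U_{m_0,m_1} is the diagonal unitary on ℂ³ with diagonal ((−1)^{m_0}, (−1)^{m_1}, 1). -/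
/-!
No entanglement is needed: `d = 1` suffices. The receiver sends the uniform superposition
`v = (1, 1, 1) / √3`, which the sender maps to `w_m / √3`, where `w_m` is the vector of
phases. The sign characters involved are orthogonal, so `∑ₘ |w_m⟩⟨w_m| = 4 I`, and
`M_m = |w_m⟩⟨w_m| / 4` is a measurement. Each `m` is then guessed correctly with probability
`|⟨w_m, w_m⟩|² / (4 · 3) = 9 / 12 = 3 / 4`.
-/

open scoped BigOperators ComplexOrder Kronecker
open Matrix

/-- The unnormalised rank-one projector `|w_m⟩⟨w_m|` onto the vector of phases, on `ℂ³ ⊗ ℂ¹`.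
For `m = (false, false)` it is the all-ones matrix. -/
noncomputable def phaseProj (m : Bool × Bool) : Matrix (Fin 3 × Fin 1) (Fin 3 × Fin 1) ℂ :=
  vecMulVec (fun p => phase m p.1) (star fun p => phase m p.1)

theorem phaseProj_posSemidef (m : Bool × Bool) : (phaseProj m).PosSemidef :=
  posSemidef_vecMulVec_self_star _

theorem phaseProj_trace (m : Bool × Bool) : (phaseProj m).trace = 3 := by
  rcases m with ⟨_ | _, _ | _⟩ <;>
    simp [phaseProj, phase, trace, Fintype.sum_prod_type, Fin.sum_univ_three, vecMulVec_apply] <;>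
    norm_num

theorem phaseProj_mul_self (m : Bool × Bool) :
    phaseProj m * phaseProj m = (3 : ℂ) • phaseProj m := by
  have h : (star fun p : Fin 3 × Fin 1 => phase m p.1) ⬝ᵥ (fun p => phase m p.1) = 3 := by
    rw [← phaseProj_trace m, phaseProj, trace_vecMulVec, dotProduct_comm]
  rw [phaseProj, vecMulVec_mul_vecMulVec, h, vecMulVec_smul]

/-- Orthogonality of the characters `1`, `(-1)^{m₀}`, `(-1)^{m₁}`. -/
theorem sum_phaseProj : ∑ m, phaseProj m = (4 : ℂ) • 1 := by
  ext ⟨i, k⟩ ⟨j, l⟩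
  fin_cases k; fin_cases l
  fin_cases i <;> fin_cases j <;>
    simp [phaseProj, phase, Fintype.sum_prod_type, vecMulVec_apply, Matrix.add_apply] <;>
    norm_num

/-- The sender's unitary maps the uniform superposition to the vector of phases. -/
theorem V_conj_phaseProj (m : Bool × Bool) :
    V 1 m * phaseProj (false, false) * (V 1 m)ᴴ = phaseProj m := by
  have hV : V 1 m = diagonal fun p => phase m p.1 := by
    rw [V, ← diagonal_one, diagonal_kronecker_diagonal]
    simp
  ext p q
  rw [hV, diagonal_conjTranspose, mul_diagonal, diagonal_mul]
  simp [phaseProj, phase, vecMulVec_apply]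

/-- Tightness of the `3/4` cheating bound for the receiver in the
Chailloux–Kerenidis–Sikora weak OT protocol: there exist a dimension `d ≥ 1`, a state
`ρ` on `ℂ³ ⊗ ℂ^d` (positive semidefinite, trace 1) and a four-outcome POVM
`{M_{m₀m₁}}` whose average success probability
`(1/4) Σ_{m₀,m₁} tr(M_{m₀m₁} (U_{m₀,m₁} ⊗ I_d) ρ (U_{m₀,m₁} ⊗ I_d)†)` equals `3/4`. -/
theorem cks_receiver_cheating_tight :
    ∃ (d : ℕ), 1 ≤ d ∧
    ∃ (ρ : Matrix (Fin 3 × Fin d) (Fin 3 × Fin d) ℂ)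
      (M : Bool × Bool → Matrix (Fin 3 × Fin d) (Fin 3 × Fin d) ℂ),
      ρ.PosSemidef ∧ ρ.trace = 1 ∧
      (∀ m, (M m).PosSemidef) ∧ (∑ m, M m = 1) ∧
      (1 / 4 : ℝ) * (∑ m : Bool × Bool,
          (M m * (V d m * ρ * (V d m)ᴴ)).trace).re = 3 / 4 := by
  refine ⟨1, le_rfl, (1 / 3 : ℂ) • phaseProj (false, false), fun m => (1 / 4 : ℂ) • phaseProj m,
    (phaseProj_posSemidef _).smul (by norm_num [Complex.le_def]), ?_,
    fun m => (phaseProj_posSemidef m).smul (by norm_num [Complex.le_def]), ?_, ?_⟩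
  · rw [trace_smul, phaseProj_trace]
    norm_num
  · rw [← Finset.smul_sum, sum_phaseProj, smul_smul]
    norm_num
  · have h (m : Bool × Bool) : ((1 / 4 : ℂ) • phaseProj m *
        (V 1 m * ((1 / 3 : ℂ) • phaseProj (false, false)) * (V 1 m)ᴴ)).trace = 3 / 4 := by
      rw [mul_smul_comm, smul_mul_assoc (1 / 3 : ℂ) (V 1 m * _), V_conj_phaseProj, smul_mul_smul_comm,
        phaseProj_mul_self, trace_smul, trace_smul, phaseProj_trace]
      norm_num
    simp only [h]
    norm_num
end

section
/- Correctness of the Amiri et al. weak OT protocol via unambiguous state elimination: for bits m_0, m_1 ∈ {0,1}, let the sender's two-qubit state be |x⟩_θ ⊗ |x⟩_θ where (θ, x) = (computational, 0) if (m_0,m_1) = (0,0), (Hadamard, 0) if (0,1), (Hadamard, 1) if (1,0), and (computational, 1) if (1,1). The receiver measures the first qubit in the computational basis obtaining y_0 and the second qubit in the Hadamard basis obtaining y_1, with outcome probabilities given by the product Born rule. Define the kept tuples A = (y_0, y_0) from {(0,0),(1,1)} and B = (y_1, 1−y_1) from {(0,1),(1,0)}. Then: (i) for every outcome pair (y_0,y_1),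 A and B agree in exactly one coordinate j ∈ {0,1} (namely j = 0 if y_0 = y_1 and j = 1 otherwise); and (ii) with probability 1 over the measurement outcomes, the receiver's output bit m := A_j satisfies m = m_j, the sender's true bit in position j. -/
/-! The computational and Hadamard bases are mutually unbiased: measuring `|x⟩_θ` in the basis `θ`
returns `x` with certainty, and in the other basis a uniform bit (`bornProb_ket`). So for each
message exactly two outcome pairs have positive probability, `1 / 2` each: one outcome equals `x`
and the other is free. In all four cases the receiver's output bit is correct on both pairs, so the
correct outcomes carry total probability `1`. -/

open scoped BigOperators

/-- Joint form of the two cases of the Born rule: equal bases (orthonormality) and different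
bases (mutual unbiasedness). -/
theorem bornProb_ket (θ y φ x : Bool) :
    bornProb (ket θ y) (ket φ x) = if θ = φ then (if y = x then 1 else 0) else 1 / 2 := by
  have h2 : ((Real.sqrt 2 : ℝ) : ℂ) * ((Real.sqrt 2 : ℝ) : ℂ) = 2 := by
    exact_mod_cast Real.mul_self_sqrt (by norm_num : (0 : ℝ) ≤ 2)
  -- The form in which `√2 ^ 2 = 2` enters the Hadamard amplitudes once `simp` has unfolded them.
  have hi : ((Real.sqrt 2 : ℝ) : ℂ)⁻¹ * ((Real.sqrt 2 : ℝ) : ℂ)⁻¹ = 1 / 2 := by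
    rw [← mul_inv, h2]; norm_num
  cases θ <;> cases φ <;> cases y <;> cases x <;>
    simp [bornProb, ket, Fin.sum_univ_two, neg_div, hi] <;>
    norm_num

/-- Correctness of the Amiri et al. weak OT protocol via unambiguous state
elimination.  The sender's two-qubit state is `|x⟩_θ ⊗ |x⟩_θ` with `(θ, x)` determined
by the message bits `(m₀, m₁)` via the encoding table (hypothesis `henc`).  The
receiver measures the first qubit in the computational basis (outcome `y₀`) and the
second in the Hadamard basis (outcome `y₁`), with the product Born rule.  The kept
tuples are `A = (y₀, y₀)` and `B = (y₁, 1−y₁)` (coordinates indexed by `Bool`, with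
`B j = cond j (!y₁) y₁`).  Then:
(i) `A` and `B` agree in exactly the coordinate `j = (y₀ != y₁)` (i.e. `j = 0` iff
`y₀ = y₁`) and disagree in the other coordinate; and
(ii) with probability 1 over the outcomes, the receiver's output bit `A j = y₀`
equals the sender's bit `m_j = cond j m₁ m₀` in position `j`. -/
theorem amiri_correctness (m0 m1 θ x : Bool)
    (henc : (θ, x) = match m0, m1 with
      | false, false => (false, false)
      | false, true  => (true, false)
      | true,  false => (true, true)
      | true,  true  => (false, true)) :
    (∀ y0 y1 : Bool,
        y0 = cond (y0 != y1) (!y1) y1 ∧ y0 ≠ cond (!(y0 != y1)) (!y1) y1)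
    ∧
    (∑ y0 : Bool, ∑ y1 : Bool,
        (if y0 = cond (y0 != y1) m1 m0
          then bornProb (ket false y0) (ket θ x) * bornProb (ket true y1) (ket θ x)
          else 0)) = 1 := by
  refine ⟨by decide, ?_⟩
  simp only [bornProb_ket, Fintype.sum_bool]
  cases m0 <;> cases m1 <;> obtain ⟨rfl, rfl⟩ := Prod.mk.inj henc <;> norm_num
end
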